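/- Let H₀ be a Hilbert space, A₀ selfadjoint with 0 ≤ A₀ ≤ I, and let H = [[2-A₀, -2(I-A₀)^{1/2}],[-2(I-A₀)^{1/2}, 2-A₀]] on H₀ ⊕ H₀. Then H = (2-A₀)·[[I, -Δ],[-Δ, I]] where Δ = 2(I-A₀)^{1/2}(2-A₀)^{-1}, and H ≥ 0. -/

import Mathlib

/-!
Write `R = (I - A₀)^{1/2}`. The spectrum of `A₀` lies in `(-∞, 1]`, so the continuous functional
calculus gives `2 - A₀ = 1 + R²` and `(2 - A₀) Δ = 2 R`. The second identity is the factorization.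
For positivity, the block operator is a square: with `T = [[1, -R], [-R, 1]]`, which is
self-adjoint, `T* T = [[1 + R², -2R], [-2R, 1 + R²]]`.
-/

noncomputable section

/-- The 2×2 block operator `[[a, b], [c, d]]` acting on the Hilbert space direct
sum `H ⊕ H` (modelled as `WithLp 2 (H × H)`). -/
def blk {H : Type*} [NormedAddCommGroup H] [InnerProductSpace ℂ H] [CompleteSpace H]
    (a b c d : H →L[ℂ] H) : WithLp 2 (H × H) →L[ℂ] WithLp 2 (H × H) :=
  ((WithLp.prodContinuousLinearEquiv 2 ℂ H H).symm.toContinuousLinearMap).comp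
    ((((a.comp (ContinuousLinearMap.fst ℂ H H)) + (b.comp (ContinuousLinearMap.snd ℂ H H))).prod
      ((c.comp (ContinuousLinearMap.fst ℂ H H)) + (d.comp (ContinuousLinearMap.snd ℂ H H)))).comp
      (WithLp.prodContinuousLinearEquiv 2 ℂ H H).toContinuousLinearMap)

theorem blk_comp_blk {H : Type*} [NormedAddCommGroup H] [InnerProductSpace ℂ H] [CompleteSpace H]
    (a b c d a' b' c' d' : H →L[ℂ] H) :
    blk a b c d ∘L blk a' b' c' d' =
      blk (a ∘L a' + b ∘L c') (a ∘L b' + b ∘L d') (c ∘L a' + d ∘L c') (c ∘L b' + d ∘L d') := by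
  ext x
  simp only [blk, ContinuousLinearMap.comp_apply]
  simp
  constructor <;> abel

theorem adjoint_blk {H : Type*} [NormedAddCommGroup H] [InnerProductSpace ℂ H] [CompleteSpace H]
    (a b c d : H →L[ℂ] H) :
    (blk a b c d).adjoint = blk a.adjoint c.adjoint b.adjoint d.adjoint := by
  refine ((ContinuousLinearMap.eq_adjoint_iff _ _).mpr fun x y => ?_).symm
  simp only [blk, WithLp.prod_inner_apply]
  simp [inner_add_left, inner_add_right, ContinuousLinearMap.adjoint_inner_left]
  ring

/-- With `R = (I-A₀)^{1/2}` and `Δ = 2(I-A₀)^{1/2}(2-A₀)⁻¹`, the block operator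
`H = [[2-A₀, -2R],[-2R, 2-A₀]]` equals `diag(2-A₀, 2-A₀) · [[I, -Δ],[-Δ, I]]`,
and `H ≥ 0`. -/
theorem H_factorization_and_pos {H₀ : Type*} [NormedAddCommGroup H₀]
    [InnerProductSpace ℂ H₀] [CompleteSpace H₀] (A₀ : H₀ →L[ℂ] H₀)
    (hsa : IsSelfAdjoint A₀) (h0 : 0 ≤ A₀) (h1 : A₀ ≤ 1) :
    blk (2 - A₀) (-(2 • cfc (fun t : ℝ => Real.sqrt (1 - t)) A₀))
        (-(2 • cfc (fun t : ℝ => Real.sqrt (1 - t)) A₀)) (2 - A₀) =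
      (blk (2 - A₀) 0 0 (2 - A₀)) ∘L
        (blk 1 (-(cfc (fun t : ℝ => 2 * Real.sqrt (1 - t) / (2 - t)) A₀))
          (-(cfc (fun t : ℝ => 2 * Real.sqrt (1 - t) / (2 - t)) A₀)) 1) ∧
    (blk (2 - A₀) (-(2 • cfc (fun t : ℝ => Real.sqrt (1 - t)) A₀))
        (-(2 • cfc (fun t : ℝ => Real.sqrt (1 - t)) A₀)) (2 - A₀)).IsPositive := by
  have hspec : ∀ t ∈ spectrum ℝ A₀, t ≤ 1 :=
    (le_algebraMap_iff_spectrum_le (R := ℝ) (r := 1) (ha := hsa)).mp (by simpa using h1)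
  have hone : (2 - A₀ : H₀ →L[ℂ] H₀) = cfc (fun t : ℝ => 2 - t) A₀ := by
    rw [cfc_sub (fun _ : ℝ => 2) (fun t : ℝ => t) A₀, cfc_const (2 : ℝ) A₀, cfc_id' ℝ A₀, map_ofNat]
  have hR : 2 - A₀ = 1 + cfc (fun t : ℝ => Real.sqrt (1 - t)) A₀ * cfc (fun t : ℝ => Real.sqrt (1 - t)) A₀ := by
    rw [← cfc_mul .., ← cfc_const_one ℝ A₀, ← cfc_add .., hone]
    refine cfc_congr fun t ht => ?_
    have := Real.mul_self_sqrt (sub_nonneg.mpr (hspec t ht))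
    simp only [this]
    ring
  have hΔ : (2 - A₀) * cfc (fun t : ℝ => 2 * Real.sqrt (1 - t) / (2 - t)) A₀ =
      2 • cfc (fun t : ℝ => Real.sqrt (1 - t)) A₀ := by
    have hne : ∀ t ∈ spectrum ℝ A₀, 2 - t ≠ 0 := fun t ht => by linarith [hspec t ht]
    have hc : ContinuousOn (fun t : ℝ => 2 * Real.sqrt (1 - t) / (2 - t)) (spectrum ℝ A₀) :=
      ContinuousOn.div (by fun_prop) (by fun_prop) hne
    rw [hone, ← cfc_mul (fun t : ℝ => 2 - t) _ A₀ (by fun_prop) hc, ← cfc_smul ..]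
    refine cfc_congr fun t ht => ?_
    have := hne t ht
    simp only [nsmul_eq_mul, Nat.cast_ofNat]
    field_simp
  have hRsa : IsSelfAdjoint (cfc (fun t : ℝ => Real.sqrt (1 - t)) A₀) := cfc_predicate _ _
  constructor
  · rw [blk_comp_blk]
    simp only [← ContinuousLinearMap.mul_def, mul_neg, hΔ, mul_one, zero_mul, add_zero, zero_add,
      neg_zero]
  · rw [hR]
    generalize cfc (fun t : ℝ => Real.sqrt (1 - t)) A₀ = R at hRsa
    have hsq : blk (1 + R * R) (-(2 • R)) (-(2 • R)) (1 + R * R) =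
        (blk 1 (-R) (-R) 1).adjoint ∘L blk 1 (-R) (-R) 1 := by
      have hadj : R.adjoint = R := hRsa
      simp only [adjoint_blk, blk_comp_blk, map_neg, hadj, ContinuousLinearMap.one_def,
        ContinuousLinearMap.adjoint_id]
      simp only [← ContinuousLinearMap.mul_def, ← ContinuousLinearMap.one_def]
      congr 1 <;> noncomm_ring
    rw [hsq]
    exact ContinuousLinearMap.isPositive_adjoint_comp_self _

end
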